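/- Fix an integer n ≥ 1 and let P be the n×n matrix with entries P(i,j) = 2^{−n}·binom(n+1, 2j−i+1) for 0 ≤ i,j ≤ n−1 (the base-2 carries matrix; binomial coefficients with out-of-range lower index are zero). Then P is totally positive: for every k ≥ 1 and all indices 0 ≤ i_1 < ⋯ < i_k ≤ n−1 and 0 ≤ j_1 < ⋯ < j_k ≤ n−1, the determinant of the k×k submatrix (P(i_r, j_s))_{1≤r,s≤k} is non-negative. -/

import Mathlib

/-- The base-2 carries matrix for adding `n` numbers:
`P(i,j) = 2^{−n}·binom(n+1, 2j−i+1)` for `0 ≤ i,j ≤ n−1`, where binomial coefficients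
with out-of-range (in particular negative) lower index are zero. -/
noncomputable def carriesMat2 (n : ℕ) (i j : ℕ) : ℝ :=
  if i ≤ 2 * j + 1 then ((n + 1).choose (2 * j + 1 - i) : ℝ) / 2 ^ n else 0

/-!
Up to the factor `2⁻ⁿ`, the carries matrix consists of the odd-numbered columns of the infinite
upper triangular Toeplitz matrix of `(1 + X) ^ (n + 1)`. Multiplying a polynomial by `a + b X`
replaces each row of its Toeplitz matrix by `a` times itself plus `b` times the next row. By
multilinearity, a minor of the new matrix is a combination, with products of `a`s and `b`s as
coefficients, of minors of the old one in which some of the chosen rows have moved down by one.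
Strictly increasing rows remain weakly increasing under such moves, so each of these minors is
either one with strictly increasing rows or zero because a row is repeated.
-/

open Finset Matrix Order Polynomial

variable {ι κ R : Type*}

theorem det_of_mul_add_mul [DecidableEq ι] [Fintype ι] [CommRing R] (a b : ι → R)
    (A B : Matrix ι ι R) :
    (of fun i j ↦ a i * A i j + b i * B i j).det =
      ∑ S : Finset ι, (∏ i, S.piecewise a b i) * (of (S.piecewise A.row B.row)).det :=
  calc (of fun i j ↦ a i * A i j + b i * B i j).det
      = ∑ S : Finset ι, (of (S.piecewise (fun i ↦ a i • A i) fun i ↦ b i • B i)).det :=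
        detRowAlternating.toMultilinearMap.map_add_univ _ _
    _ = _ := sum_congr rfl fun S _ ↦ by
        rw [← det_mul_column]
        congr 1
        ext i j
        by_cases hi : i ∈ S <;> simp [hi]

theorem monotone_piecewise_succ [DecidableEq ι] [PartialOrder ι] [Preorder κ] [SuccOrder κ]
    {f : ι → κ} (hf : StrictMono f) (S : Finset ι) : Monotone (S.piecewise f (succ ∘ f)) := by
  intro i j hij
  rcases hij.eq_or_lt with rfl | hlt
  · rfl
  calc S.piecewise f (succ ∘ f) i
      ≤ succ (f i) := S.piecewise_le_of_le_of_le (fun i ↦ le_succ (f i)) le_rfl i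
    _ ≤ f j := succ_le_of_lt (hf hlt)
    _ ≤ S.piecewise f (succ ∘ f) j := S.le_piecewise_of_le_of_le le_rfl (fun i ↦ le_succ (f i)) j

/-- Total nonnegativity of a possibly infinite matrix: all minors with increasing rows and columns
are nonnegative. The literature on carries calls this *total positivity*. -/
def IsTotallyNonneg [Preorder ι] [Preorder κ] [CommRing R] [LE R] (A : Matrix ι κ R) : Prop :=
  ∀ ⦃k : ℕ⦄ (row : Fin k → ι) (col : Fin k → κ), StrictMono row → StrictMono col →
    0 ≤ (A.submatrix row col).det

namespace IsTotallyNonneg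

variable [CommRing R] [PartialOrder R]

theorem submatrix {ι' κ' : Type*} [Preorder ι] [Preorder κ] [Preorder ι'] [Preorder κ']
    {A : Matrix ι κ R} (hA : IsTotallyNonneg A) {f : ι' → ι} {g : κ' → κ} (hf : StrictMono f)
    (hg : StrictMono g) : IsTotallyNonneg (A.submatrix f g) :=
  fun _ row col hrow hcol ↦ hA (f ∘ row) (g ∘ col) (hf.comp hrow) (hg.comp hcol)

theorem det_submatrix_nonneg_of_monotone [PartialOrder ι] [Preorder κ] {A : Matrix ι κ R}
    (hA : IsTotallyNonneg A) {k : ℕ} {row : Fin k → ι} {col : Fin k → κ} (hrow : Monotone row)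
    (hcol : StrictMono col) : 0 ≤ (A.submatrix row col).det := by
  by_cases hinj : row.Injective
  · exact hA row col (hrow.strictMono_of_injective hinj) hcol
  · obtain ⟨r, s, hrs, hne⟩ := Function.not_injective_iff.mp hinj
    refine (det_zero_of_row_eq hne ?_).ge
    ext t
    simp [hrs]

variable [IsOrderedRing R]

theorem smul [Preorder ι] [Preorder κ] {A : Matrix ι κ R} (hA : IsTotallyNonneg A) {c : R}
    (hc : 0 ≤ c) : IsTotallyNonneg (c • A) := fun _ row col hrow hcol ↦ by
  change 0 ≤ (c • A.submatrix row col).det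
  rw [det_smul]
  exact mul_nonneg (pow_nonneg hc _) (hA row col hrow hcol)

theorem one [DecidableEq ι] [PartialOrder ι] : IsTotallyNonneg (1 : Matrix ι ι R) := by
  intro k row col hrow hcol
  by_cases hsub : Set.range row ⊆ Set.range col
  · have hrange : Set.range row = Set.range col := Set.eq_of_subset_of_ncard_le hsub <| by
      rw [Set.ncard_range_of_injective hrow.injective, Set.ncard_range_of_injective hcol.injective]
    obtain rfl : row = col := (hrow.range_inj hcol).mp hrange
    rw [submatrix_one row hrow.injective, det_one]
    exact zero_le_one
  · obtain ⟨_, ⟨r, rfl⟩, hr⟩ := Set.not_subset.mp hsub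
    refine (det_eq_zero_of_row_eq_zero r fun s ↦ ?_).ge
    exact one_apply_ne fun h ↦ hr ⟨s, h.symm⟩

theorem mul_row_add_mul_succ_row [PartialOrder ι] [SuccOrder ι] [Preorder κ] {A : Matrix ι κ R}
    (hA : IsTotallyNonneg A) {a b : ι → R} (ha : 0 ≤ a) (hb : 0 ≤ b) :
    IsTotallyNonneg (of fun i j ↦ a i * A i j + b i * A (succ i) j) := by
  intro k row col hrow hcol
  have hexpand := det_of_mul_add_mul (a ∘ row) (b ∘ row) (A.submatrix row col)
    (A.submatrix (succ ∘ row) col)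
  refine (sum_nonneg fun S _ ↦ mul_nonneg (prod_nonneg fun r _ ↦ ?_) ?_).trans_eq hexpand.symm
  · exact S.le_piecewise_of_le_of_le (fun r ↦ ha (row r)) (fun r ↦ hb (row r)) r
  · have hrows : of (S.piecewise (A.submatrix row col).row (A.submatrix (succ ∘ row) col).row) =
        A.submatrix (S.piecewise row (succ ∘ row)) col := by
      ext r s
      by_cases hr : r ∈ S <;> simp [hr]
    rw [hrows]
    exact hA.det_submatrix_nonneg_of_monotone (monotone_piecewise_succ hrow S) hcol

end IsTotallyNonneg

/-- The infinite upper triangular Toeplitz matrix of a polynomial, whose `(i, j)` entry is the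
coefficient of `X ^ (j - i)`, and `0` for `j < i`. Writing it as a coefficient of `X ^ i * p`
avoids truncated subtraction. -/
noncomputable def toeplitz [Semiring R] (p : R[X]) : Matrix ℕ ℕ R :=
  of fun i j ↦ (X ^ i * p).coeff j

theorem toeplitz_apply [Semiring R] (p : R[X]) (i j : ℕ) :
    toeplitz p i j = if i ≤ j then p.coeff (j - i) else 0 :=
  coeff_X_pow_mul' p i j

theorem toeplitz_one [Semiring R] : toeplitz (1 : R[X]) = 1 := by
  ext i j
  simp [toeplitz, coeff_X_pow, one_apply, eq_comm]

theorem toeplitz_linear_mul [CommSemiring R] (a b : R) (p : R[X]) :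
    toeplitz ((C a + C b * X) * p) =
      of fun i j ↦ a * toeplitz p i j + b * toeplitz p (succ i) j := by
  ext i j
  have hsplit : X ^ i * ((C a + C b * X) * p) = C a * (X ^ i * p) + C b * (X ^ (i + 1) * p) := by
    ring
  simp only [toeplitz, of_apply, succ_eq_add_one, hsplit, coeff_add, coeff_C_mul]

theorem isTotallyNonneg_toeplitz_prod_linear [CommRing R] [PartialOrder R] [IsOrderedRing R]
    (s : Finset ι) {a b : ι → R} (ha : ∀ i ∈ s, 0 ≤ a i) (hb : ∀ i ∈ s, 0 ≤ b i) :
    IsTotallyNonneg (toeplitz (∏ i ∈ s, (C (a i) + C (b i) * X))) := by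
  classical
  induction s using Finset.induction_on with
  | empty => simpa only [prod_empty, toeplitz_one] using IsTotallyNonneg.one
  | insert i s hi ih =>
    rw [prod_insert hi, toeplitz_linear_mul]
    rw [forall_mem_insert] at ha hb
    exact (ih ha.2 hb.2).mul_row_add_mul_succ_row (fun _ ↦ ha.1) (fun _ ↦ hb.1)

theorem isTotallyNonneg_toeplitz_one_add_X_pow [CommRing R] [PartialOrder R] [IsOrderedRing R]
    (n : ℕ) : IsTotallyNonneg (toeplitz ((1 + X) ^ n : R[X])) := by
  simpa using isTotallyNonneg_toeplitz_prod_linear (R := R) (range n) (a := 1) (b := 1)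
    (fun _ _ ↦ zero_le_one) (fun _ _ ↦ zero_le_one)

theorem carriesMat2_eq_smul_toeplitz_submatrix (n : ℕ) :
    of (carriesMat2 n) =
      ((2 : ℝ) ^ n)⁻¹ • (toeplitz ((1 + X) ^ (n + 1))).submatrix id (fun j ↦ 2 * j + 1) := by
  ext i j
  simp [carriesMat2, toeplitz_apply, coeff_one_add_X_pow, div_eq_inv_mul]

theorem carriesMat2_totally_positive_general (n : ℕ) : IsTotallyNonneg (of (carriesMat2 n)) := by
  rw [carriesMat2_eq_smul_toeplitz_submatrix]
  have hodd : StrictMono fun j : ℕ ↦ 2 * j + 1 := fun _ _ _ ↦ by lia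
  exact ((isTotallyNonneg_toeplitz_one_add_X_pow (n + 1)).submatrix strictMono_id hodd).smul
    (by positivity)

/-- **The base-2 carries matrix is totally positive** (`TP_∞`): every `k×k` minor, taken
with strictly increasing row indices and strictly increasing column indices within
`{0,…,n−1}`, has non-negative determinant. -/
theorem carriesMat2_totally_positive (n : ℕ) (hn : 1 ≤ n) (k : ℕ) (hk : 1 ≤ k)
    (row col : Fin k → ℕ) (hrow : StrictMono row) (hcol : StrictMono col)
    (hrown : ∀ r, row r ≤ n - 1) (hcoln : ∀ s, col s ≤ n - 1) :
    0 ≤ Matrix.det (Matrix.of fun r s : Fin k => carriesMat2 n (row r) (col s)) :=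
  carriesMat2_totally_positive_general n row col hrow hcol
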